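/- arXiv:1205.0343 — 2 statements merged into one kernel-verified Lean document; each statement's English description precedes it below -/
import Mathlib

section
/- Let n_1 and n_2 be odd integers with min{n_1, n_2} ≥ 5. Then the signed domination number of the complete bipartite graph K_{n_1,n_2} equals 6. -/
open scoped Classical

/-- The signed domination number of a finite simple graph `G`: the minimum weight of a
function `f : V → {−1, 1}` such that `f(N[v]) ≥ 1` for every vertex `v`. -/
noncomputable def signedDomNum {V : Type*} [Fintype V] (G : SimpleGraph V) : ℤ :=
  sInf {w : ℤ | ∃ f : V → ℤ, (∀ v, f v = 1 ∨ f v = -1) ∧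
    (∀ v, 1 ≤ f v + ∑ u ∈ G.neighborFinset v, f u) ∧ w = ∑ v, f v}

/-- The neighbours of a left vertex of a complete bipartite graph are the right vertices. -/
theorem sum_neighborFinset_completeBipartiteGraph_inl {α β : Type*} [Fintype α] [Fintype β]
    (f : α ⊕ β → ℤ) (a : α)
    [Fintype ((completeBipartiteGraph α β).neighborSet (Sum.inl a))] :
    ∑ u ∈ (completeBipartiteGraph α β).neighborFinset (Sum.inl a), f u =
      ∑ b, f (Sum.inr b) := by
  have h : (completeBipartiteGraph α β).neighborFinset (Sum.inl a) =
      Finset.univ.map Function.Embedding.inr := by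
    ext (x | x) <;> simp
  rw [h, Finset.sum_map]
  rfl

/-- The neighbours of a right vertex of a complete bipartite graph are the left vertices. -/
theorem sum_neighborFinset_completeBipartiteGraph_inr {α β : Type*} [Fintype α] [Fintype β]
    (f : α ⊕ β → ℤ) (b : β)
    [Fintype ((completeBipartiteGraph α β).neighborSet (Sum.inr b))] :
    ∑ u ∈ (completeBipartiteGraph α β).neighborFinset (Sum.inr b), f u =
      ∑ a, f (Sum.inl a) := by
  have h : (completeBipartiteGraph α β).neighborFinset (Sum.inr b) =
      Finset.univ.map Function.Embedding.inl := by
    ext (x | x) <;> simp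
  rw [h, Finset.sum_map]
  rfl

theorem odd_sum_of_forall_eq_one_or_neg_one {n : ℕ} (hn : Odd n) (g : Fin n → ℤ)
    (hg : ∀ i, g i = 1 ∨ g i = -1) : Odd (∑ i, g i) := by
  have hodd (i : Fin n) : g i % 2 = 1 := by
    rcases hg i with h | h <;> rw [h] <;> rfl
  obtain ⟨k, rfl⟩ := hn
  rw [Int.odd_iff, Finset.sum_int_mod, Finset.sum_congr rfl fun i _ => hodd i]
  simp only [Finset.sum_const, Finset.card_univ, Fintype.card_fin, nsmul_eq_mul]
  omega

/-- A `±1`-valued family is either constantly `1` or takes the value `-1`. -/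
theorem exists_eq_neg_one_or_sum_eq_card {n : ℕ} (g : Fin n → ℤ)
    (hg : ∀ i, g i = 1 ∨ g i = -1) : (∃ i, g i = -1) ∨ ∑ i, g i = n := by
  by_cases h : ∃ i, g i = -1
  · exact Or.inl h
  · push Not at h
    right
    rw [Finset.sum_congr rfl fun i _ => (hg i).resolve_right (h i)]
    simp

theorem exists_sum_eq_three (m : ℕ) :
    ∃ g : Fin (2 * m + 3) → ℤ, (∀ i, g i = 1 ∨ g i = -1) ∧ ∑ i, g i = 3 := by
  induction m with
  | zero => exact ⟨fun _ => 1, by simp, by simp⟩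
  | succ m ih =>
    obtain ⟨g, hg, hsum⟩ := ih
    refine ⟨(Fin.cons 1 (Fin.cons (-1) g : Fin (2 * m + 3 + 1) → ℤ) :
      Fin (2 * m + 3 + 1 + 1) → ℤ), ?_, ?_⟩
    · change ∀ i : Fin (2 * m + 3 + 1 + 1), _
      simpa [Fin.forall_fin_succ (n := 2 * m + 3 + 1), Fin.forall_fin_succ (n := 2 * m + 3)]
        using hg
    · change ∑ i : Fin (2 * m + 3 + 1 + 1), _ = _
      rw [Fin.sum_cons, Fin.sum_cons, hsum]
      norm_num

theorem signedDomNum_completeBipartite_min_ge_five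
    (n₁ n₂ : ℕ) (h₁ : Odd n₁) (h₂ : Odd n₂) (hmin : 5 ≤ min n₁ n₂) :
    signedDomNum (completeBipartiteGraph (Fin n₁) (Fin n₂)) = 6 := by
  obtain ⟨hn₁, hn₂⟩ := le_min_iff.mp hmin
  refine IsLeast.csInf_eq ⟨?_, ?_⟩
  · obtain ⟨m₁, rfl⟩ : ∃ m, n₁ = 2 * m + 3 := by
      obtain ⟨k, rfl⟩ := h₁
      exact ⟨k - 1, by omega⟩
    obtain ⟨m₂, rfl⟩ : ∃ m, n₂ = 2 * m + 3 := by
      obtain ⟨k, rfl⟩ := h₂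
      exact ⟨k - 1, by omega⟩
    obtain ⟨g₁, hg₁, hs₁⟩ := exists_sum_eq_three m₁
    obtain ⟨g₂, hg₂, hs₂⟩ := exists_sum_eq_three m₂
    refine ⟨Sum.elim g₁ g₂, ?_, ?_, ?_⟩
    · rintro (a | b)
      · exact hg₁ a
      · exact hg₂ b
    · rintro (a | b)
      · rw [sum_neighborFinset_completeBipartiteGraph_inl]
        simp only [Sum.elim_inl, Sum.elim_inr, hs₂]
        rcases hg₁ a with h | h <;> omega
      · rw [sum_neighborFinset_completeBipartiteGraph_inr]
        simp only [Sum.elim_inl, Sum.elim_inr, hs₁]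
        rcases hg₂ b with h | h <;> omega
    · simp [Fintype.sum_sum_type, hs₁, hs₂]
  · rintro w ⟨f, hf, hdom, rfl⟩
    rw [Fintype.sum_sum_type]
    have hl (a : Fin n₁) := hdom (Sum.inl a)
    have hr (b : Fin n₂) := hdom (Sum.inr b)
    simp only [sum_neighborFinset_completeBipartiteGraph_inl] at hl
    simp only [sum_neighborFinset_completeBipartiteGraph_inr] at hr
    obtain ⟨c, hc⟩ := odd_sum_of_forall_eq_one_or_neg_one h₁ _ fun a => hf (Sum.inl a)
    obtain ⟨d, hd⟩ := odd_sum_of_forall_eq_one_or_neg_one h₂ _ fun b => hf (Sum.inr b)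
    have hl₀ := hl ⟨0, by omega⟩
    have hr₀ := hr ⟨0, by omega⟩
    have hfl := hf (Sum.inl ⟨0, by omega⟩)
    have hfr := hf (Sum.inr ⟨0, by omega⟩)
    rcases exists_eq_neg_one_or_sum_eq_card _ fun a => hf (Sum.inl a) with ⟨a, ha⟩ | ha <;>
    rcases exists_eq_neg_one_or_sum_eq_card _ fun b => hf (Sum.inr b) with ⟨b, hb⟩ | hb
    · have := hl a
      have := hr b
      omega
    · have := hl a
      omega
    · have := hr b
      omega
    · omega
end

section
/- Let k ≥ 2 and n_1, …, n_k be positive integers, let t be the number of indices i with n_i odd, let I_1 = {i : n_i = 1}, and let I_2 = {i : n_i = 2}. If t is even and |I_1| + |I_2| ≥ t/2 + 1, then the signed domination number of the complete k-partite graph K_{n_1,…,n_k} equals 2. -/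
open scoped Classical

/-- In a complete multipartite graph, the neighbours of a vertex are the vertices outside its
part. -/
theorem sum_neighborFinset_completeMultipartiteGraph {k : ℕ} {n : Fin k → ℕ}
    (f : (Σ i : Fin k, Fin (n i)) → ℤ) (v : Σ i : Fin k, Fin (n i))
    [Fintype ((SimpleGraph.completeMultipartiteGraph fun i : Fin k => Fin (n i)).neighborSet v)] :
    ∑ u ∈ (SimpleGraph.completeMultipartiteGraph fun i : Fin k => Fin (n i)).neighborFinset v, f u
      = ∑ u, f u - ∑ j, f ⟨v.1, j⟩ := by
  have hnbr : (SimpleGraph.completeMultipartiteGraph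
      fun i : Fin k => Fin (n i)).neighborFinset v = Finset.univ.filter fun u => ¬ u.1 = v.1 := by
    ext u
    simp [SimpleGraph.completeMultipartiteGraph, eq_comm]
  have hpart : ∑ u ∈ Finset.univ.filter (fun u : Σ i : Fin k, Fin (n i) => u.1 = v.1), f u
      = ∑ j, f ⟨v.1, j⟩ := by
    rw [Finset.sum_filter, Fintype.sum_sigma, Finset.sum_eq_single v.1]
    · simp
    · intro b _ hb
      simp [hb]
    · simp
  rw [hnbr, ← hpart, ← Finset.sum_filter_add_sum_filter_not Finset.univ
    (fun u : Σ i : Fin k, Fin (n i) => u.1 = v.1) f]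
  ring

theorem sum_alternating_sign (m : ℕ) :
    ∑ j : Fin m, (if Even (j : ℕ) then (-1 : ℤ) else 1) = if Odd m then -1 else 0 := by
  rw [Fin.sum_univ_eq_sum_range (fun j => if Even j then (-1 : ℤ) else 1)]
  induction m with
  | zero => simp
  | succ m ih =>
    rw [Finset.sum_range_succ, ih]
    rcases Nat.even_or_odd m with h | h
    · simp [h, Nat.not_odd_iff_even.2 h, h.add_one]
    · simp [h, Nat.not_even_iff_odd.2 h, Nat.not_odd_iff_even.2 h.add_one]

/-- A sum of signs has the parity of the number of summands. -/
theorem even_sum_sign_sub_card {α : Type*} [Fintype α] (f : α → ℤ)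
    (hf : ∀ a, f a = 1 ∨ f a = -1) : Even (∑ a, f a - Fintype.card α) := by
  have h : ∑ a, f a - (Fintype.card α : ℤ) = ∑ a, (f a - 1) := by
    simp [Finset.sum_sub_distrib]
  rw [h]
  refine Finset.even_sum _ fun a _ => ?_
  rcases hf a with h | h <;> simp [h]

/-- The total weight of a signed dominating function of a complete multipartite graph is
positive. -/
theorem one_le_sum_of_signedDominating {k : ℕ} (hk : 2 ≤ k) {n : Fin k → ℕ} (hn : ∀ i, 0 < n i)
    (f : (Σ i : Fin k, Fin (n i)) → ℤ) (hf : ∀ v, f v = 1 ∨ f v = -1)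
    (hdom : ∀ v, 1 ≤ f v + (∑ u, f u - ∑ j, f ⟨v.1, j⟩)) : 1 ≤ ∑ v, f v := by
  by_contra! hneg
  have hpart : ∀ i, ∑ j, f ⟨i, j⟩ ≤ ∑ v, f v - 2 := by
    intro i
    by_cases hi : ∃ j, f ⟨i, j⟩ = -1
    · obtain ⟨j, hj⟩ := hi
      have := hdom ⟨i, j⟩
      rw [hj] at this
      dsimp only at this
      linarith
    · push Not at hi
      have hone : ∀ j, f ⟨i, j⟩ = 1 := fun j => (hf ⟨i, j⟩).resolve_right (hi j)
      have := hdom ⟨i, ⟨0, hn i⟩⟩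
      have hpos : (1 : ℤ) ≤ n i := by exact_mod_cast hn i
      simp only [hone, Finset.sum_const, Finset.card_univ, Fintype.card_fin, nsmul_eq_mul,
        mul_one] at this
      linarith
  have hsum : ∑ v, f v ≤ k * (∑ v, f v - 2) := by
    calc ∑ v, f v = ∑ i, ∑ j, f ⟨i, j⟩ := Fintype.sum_sigma _
      _ ≤ ∑ _i : Fin k, (∑ v, f v - 2) := Finset.sum_le_sum fun i _ => hpart i
      _ = k * (∑ v, f v - 2) := by simp [mul_sub]
  have hk' : (2 : ℤ) ≤ k := by exact_mod_cast hk
  nlinarith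

theorem even_sum_of_even_card_odd {k : ℕ} (n : Fin k → ℕ)
    (h : Even (Finset.univ.filter fun i => Odd (n i)).card) : Even (∑ i, n i) := by
  rw [← Nat.not_odd_iff_even] at h ⊢
  rwa [Finset.odd_sum_iff_odd_card_odd]

/-- All vertices of the parts in `S` get `1`; in every other part the signs alternate, starting
with `-1`. -/
noncomputable def partSign {k : ℕ} {n : Fin k → ℕ} (S : Finset (Fin k))
    (v : Σ i : Fin k, Fin (n i)) : ℤ :=
  if v.1 ∈ S then 1 else if Even (v.2 : ℕ) then -1 else 1

theorem sum_part_partSign {k : ℕ} {n : Fin k → ℕ} (S : Finset (Fin k)) (i : Fin k) :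
    ∑ j : Fin (n i), partSign S ⟨i, j⟩
      = if i ∈ S then (n i : ℤ) else if Odd (n i) then -1 else 0 := by
  by_cases hi : i ∈ S
  · simp [partSign, hi]
  · simp only [partSign, hi, if_false]
    exact sum_alternating_sign (n i)

theorem sum_partSign {k : ℕ} {n : Fin k → ℕ} (S : Finset (Fin k))
    (hS : ∀ i ∈ S, n i = 1 ∨ n i = 2) :
    ∑ v : Σ i : Fin k, Fin (n i), partSign S v
      = 2 * S.card - (Finset.univ.filter fun i => Odd (n i)).card := by
  have hpart : ∀ i, ∑ j : Fin (n i), partSign S ⟨i, j⟩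
      = 2 * (if i ∈ S then 1 else 0) - if Odd (n i) then 1 else 0 := by
    intro i
    rw [sum_part_partSign]
    by_cases hi : i ∈ S
    · rcases hS i hi with h | h
      · simp [hi, h]
      · simp [hi, h, show ¬ Odd 2 by decide]
    · simp only [hi, if_false]
      split_ifs <;> simp
  rw [Fintype.sum_sigma, Finset.sum_congr rfl fun i _ => hpart i, Finset.sum_sub_distrib,
    ← Finset.mul_sum]
  simp

theorem signedDomNum_eq_two
    (k : ℕ) (hk : 2 ≤ k) (n : Fin k → ℕ) (hn : ∀ i, 0 < n i)
    (t : ℕ) (ht : t = (Finset.univ.filter fun i => Odd (n i)).card)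
    (hteven : Even t)
    (hI : t + 2 ≤ 2 * ((Finset.univ.filter fun i => n i = 1).card
      + (Finset.univ.filter fun i => n i = 2).card)) :
    signedDomNum (SimpleGraph.completeMultipartiteGraph fun i : Fin k => Fin (n i)) = 2 := by
  refine IsLeast.csInf_eq ⟨?_, ?_⟩
  · obtain ⟨r, hr⟩ := hteven
    have hcard : r + 1 ≤ (Finset.univ.filter fun i => n i = 1 ∨ n i = 2).card := by
      rw [Finset.filter_or, Finset.card_union_of_disjoint]
      · omega
      · refine Finset.disjoint_filter.2 fun i _ h => ?_
        omega
    obtain ⟨S, hSsub, hScard⟩ := Finset.exists_subset_card_eq hcard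
    have hS : ∀ i ∈ S, n i = 1 ∨ n i = 2 := fun i hi => (Finset.mem_filter.1 (hSsub hi)).2
    have hsum : ∑ v : Σ i : Fin k, Fin (n i), partSign S v = 2 := by
      rw [sum_partSign S hS, ← ht, hScard, hr]
      push_cast
      ring
    refine ⟨partSign S, fun v => ?_, fun v => ?_, hsum.symm⟩
    · unfold partSign
      split_ifs <;> simp
    · rw [sum_neighborFinset_completeMultipartiteGraph, hsum, sum_part_partSign]
      by_cases hv : v.1 ∈ S
      · have := hS _ hv
        simp only [partSign, hv, if_true]
        omega
      · simp only [partSign, hv, if_false]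
        split_ifs <;> norm_num
  · rintro w ⟨f, hf, hdom, rfl⟩
    have hpos := one_le_sum_of_signedDominating hk hn f hf fun v => by
      have hv := hdom v
      rwa [sum_neighborFinset_completeMultipartiteGraph] at hv
    have hcard := even_sum_sign_sub_card f hf
    have hV : Even ((Fintype.card (Σ i : Fin k, Fin (n i)) : ℕ) : ℤ) := by
      rw [Int.even_coe_nat, Fintype.card_sigma]
      simpa using even_sum_of_even_card_odd n (ht ▸ hteven)
    have heven : Even (∑ v, f v) := by simpa using hcard.add hV
    obtain ⟨r, hr⟩ := heven
    omega
end
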